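/- Let G be a finite simple connected graph and let S be a Carathéodory independent set of G with |S| ≥ 2. Then the subgraph of G induced by the cycle convex hull hull(S) is connected. -/

import Mathlib

open SimpleGraph

/-- A set `S` is cycle convex in `G` if no vertex `w` outside `S` is such that the
subgraph induced by `S ∪ {w}` contains a cycle through `w`. -/
def IsCycleConvex {V : Type*} (G : SimpleGraph V) (S : Set V) : Prop :=
  ∀ w : V, w ∉ S →
    ¬ ∃ c : (G.induce (S ∪ {w})).Walk ⟨w, Set.mem_union_right S rfl⟩
        ⟨w, Set.mem_union_right S rfl⟩, c.IsCycle

/-- The cycle convex hull of `S`: the smallest cycle convex set containing `S`. -/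
def cycleHull {V : Type*} (G : SimpleGraph V) (S : Set V) : Set V :=
  ⋂₀ {T : Set V | S ⊆ T ∧ IsCycleConvex G T}

/-- `S` is Carathéodory independent in the cycle convexity of `G`. -/
def CIndep {V : Type*} (G : SimpleGraph V) (S : Set V) : Prop :=
  ∃ p ∈ cycleHull G S, ∀ a ∈ S, p ∉ cycleHull G (S \ {a})

/-- The Carathéodory number of `G` in the cycle convexity. -/
noncomputable def carNumber {V : Type*} (G : SimpleGraph V) : ℕ :=
  sSup {n : ℕ | ∃ S : Set V, CIndep G S ∧ S.ncard = n}

/-- Cycle convexity phrased with cycles of the ambient graph. -/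
lemma isCycleConvex_iff {V : Type*} (G : SimpleGraph V) (S : Set V) :
    IsCycleConvex G S ↔
      ∀ w ∉ S, ∀ c : G.Walk w w, c.IsCycle → ¬ ∀ x ∈ c.support, x ∈ S ∪ {w} := by
  refine forall₂_congr fun w hw => ?_
  constructor
  · intro h c hc hs
    refine h ⟨c.induce (S ∪ {w}) hs, ?_⟩
    rw [← Walk.isCycle_map_iff_of_injective
      (f := (Embedding.induce (G := G) (S ∪ {w})).toHom) Subtype.val_injective]
    exact (Walk.map_induce c hs).symm ▸ hc
  · rintro h ⟨c, hc⟩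
    refine h (c.map (Embedding.induce (G := G) (S ∪ {w})).toHom)
      (hc.map Subtype.val_injective) fun x hx => ?_
    have hmap := Walk.support_map (Embedding.induce (G := G) (S ∪ {w})).toHom c
    obtain ⟨y, -, rfl⟩ := List.mem_map.1 (hmap ▸ hx :)
    exact y.2

lemma subset_cycleHull {V : Type*} (G : SimpleGraph V) (S : Set V) : S ⊆ cycleHull G S :=
  Set.subset_sInter fun _ hT => hT.1

lemma cycleHull_subset {V : Type*} {G : SimpleGraph V} {S T : Set V} (hST : S ⊆ T)
    (hT : IsCycleConvex G T) : cycleHull G S ⊆ T :=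
  Set.sInter_subset_of_mem ⟨hST, hT⟩

lemma cycleHull_mono {V : Type*} {G : SimpleGraph V} {S T : Set V} (hST : S ⊆ T) :
    cycleHull G S ⊆ cycleHull G T :=
  Set.sInter_subset_sInter fun _ hU => ⟨hST.trans hU.1, hU.2⟩

lemma isCycleConvex_cycleHull {V : Type*} (G : SimpleGraph V) (S : Set V) :
    IsCycleConvex G (cycleHull G S) := by
  rw [isCycleConvex_iff]
  intro w hw c hc hs
  refine hw (Set.mem_sInter.2 fun T hT => ?_)
  by_contra hwT
  exact (isCycleConvex_iff G T).1 hT.2 w hwT c hc fun x hx =>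
    Set.union_subset_union_left _ (Set.sInter_subset_of_mem hT) (hs x hx)

/-- The vertices of the component of `p` in the subgraph induced by `H`. -/
def componentIn {V : Type*} (G : SimpleGraph V) (H : Set V) (p : V) : Set V :=
  {x | ∃ (hp : p ∈ H) (hx : x ∈ H), (G.induce H).Reachable ⟨p, hp⟩ ⟨x, hx⟩}

lemma componentIn_subset {V : Type*} (G : SimpleGraph V) (H : Set V) (p : V) :
    componentIn G H p ⊆ H :=
  fun _ ⟨_, hx, _⟩ => hx

/-- A closed walk inside `H` meeting a component of `G.induce H` stays in that component. -/
lemma mem_componentIn_of_walk {V : Type*} {G : SimpleGraph V} {H : Set V} {p w x y : V}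
    (c : G.Walk w w) (hc : ∀ z ∈ c.support, z ∈ H) (hx : x ∈ c.support) (hy : y ∈ c.support)
    (hxp : x ∈ componentIn G H p) : y ∈ componentIn G H p := by
  classical
  have key : ∀ z (hz : z ∈ c.support),
      (G.induce H).Reachable ⟨w, hc w c.start_mem_support⟩ ⟨z, hc z hz⟩ := fun z hz =>
    ⟨(c.takeUntil z hz).induce H fun u hu => hc u (c.support_takeUntil_subset_support hz hu)⟩
  obtain ⟨hp, _, hr⟩ := hxp
  exact ⟨hp, hc y hy, hr.trans ((key x hx).symm.trans (key y hy))⟩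

/-- A cycle that would violate convexity of a subset of a convex set `H` lies inside `H`. -/
lemma IsCycleConvex.support_subset {V : Type*} {G : SimpleGraph V} {H T : Set V}
    (hH : IsCycleConvex G H) (hT : T ⊆ H) {w : V} {c : G.Walk w w} (hc : c.IsCycle)
    (hs : ∀ x ∈ c.support, x ∈ T ∪ {w}) : ∀ x ∈ c.support, x ∈ H := by
  have hw : w ∈ H := by
    by_contra hw
    exact (isCycleConvex_iff G H).1 hH w hw c hc fun x hx =>
      Set.union_subset_union_left _ hT (hs x hx)
  intro x hx
  rcases hs x hx with h | rfl
  · exact hT h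
  · exact hw

lemma IsCycleConvex.inducedComponent {V : Type*} {G : SimpleGraph V} {H : Set V}
    (hH : IsCycleConvex G H) (p : V) : IsCycleConvex G (componentIn G H p) := by
  rw [isCycleConvex_iff]
  intro w hw c hc hs
  have hsnd : c.snd ∈ c.support := c.getVert_mem_support 1
  have hne : c.snd ≠ w := (c.adj_snd hc.not_nil).ne'
  exact hw (mem_componentIn_of_walk c (hH.support_subset (componentIn_subset G H p) hc hs)
    hsnd c.start_mem_support ((hs _ hsnd).resolve_right hne))

/-- Replacing a component of a convex set by a convex subset of it preserves convexity. -/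
lemma IsCycleConvex.union_diff_componentIn {V : Type*} {G : SimpleGraph V} {H K : Set V}
    {p : V} (hH : IsCycleConvex G H) (hK : IsCycleConvex G K)
    (hKC : K ⊆ componentIn G H p) :
    IsCycleConvex G (K ∪ H \ componentIn G H p) := by
  rw [isCycleConvex_iff]
  intro w hw c hc hs
  have hsH := hH.support_subset
    (Set.union_subset (hKC.trans (componentIn_subset G H p)) Set.sdiff_subset) hc hs
  have hwC : w ∈ componentIn G H p := by
    by_contra h
    exact hw (Or.inr ⟨hsH w c.start_mem_support, h⟩)
  refine (isCycleConvex_iff G K).1 hK w (fun h => hw (Or.inl h)) c hc fun x hx => ?_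
  rcases hs x hx with (h | h) | h
  · exact Or.inl h
  · exact absurd (mem_componentIn_of_walk c hsH c.start_mem_support hx hwC) h.2
  · exact Or.inr h

/-- Lemma 1(c): the cycle convex hull of a Caratheodory independent set of size
at least 2 induces a connected subgraph. -/
theorem stmt_2 {V : Type*} [Fintype V] (G : SimpleGraph V) (hG : G.Connected)
    (S : Set V) (hS : CIndep G S) (h2 : 2 ≤ S.ncard) :
    (G.induce (cycleHull G S)).Connected := by
  obtain ⟨p, hp, hpS⟩ := hS
  set H := cycleHull G S
  have hH : IsCycleConvex G H := isCycleConvex_cycleHull G S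
  have hpC : p ∈ componentIn G H p := ⟨hp, hp, Reachable.refl _⟩
  have hSC : S ⊆ componentIn G H p := by
    intro a ha
    by_contra haC
    have hKC : cycleHull G (S ∩ componentIn G H p) ⊆ componentIn G H p :=
      cycleHull_subset Set.inter_subset_right (hH.inducedComponent p)
    have hsub : H ⊆ cycleHull G (S ∩ componentIn G H p) ∪ H \ componentIn G H p := by
      refine cycleHull_subset (fun x hx => ?_)
        (hH.union_diff_componentIn (isCycleConvex_cycleHull G _) hKC)
      by_cases hxC : x ∈ componentIn G H p
      · exact Or.inl (subset_cycleHull G _ ⟨hx, hxC⟩)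
      · exact Or.inr ⟨subset_cycleHull G S hx, hxC⟩
    have hpK := (hsub hp).resolve_right fun h => h.2 hpC
    have hSa : S ∩ componentIn G H p ⊆ S \ {a} := fun x hx =>
      ⟨hx.1, fun hxa => haC (Set.mem_singleton_iff.1 hxa ▸ hx.2)⟩
    exact hpS a ha (cycleHull_mono hSa hpK)
  rw [connected_iff_exists_forall_reachable]
  refine ⟨⟨p, hp⟩, fun ⟨x, hx⟩ => ?_⟩
  obtain ⟨_, _, h⟩ := cycleHull_subset hSC (hH.inducedComponent p) hx
  exact h
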